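/- Let X be a reflexive Banach space and A : X → X* a bounded, pseudo-monotone, and coercive operator (⟨Ax, x⟩/‖x‖ → ∞ as ‖x‖ → ∞). Then A is surjective: R(A) = X*. -/

import Mathlib

open Filter Topology

section
variable {X : Type*} [NormedAddCommGroup X] [NormedSpace ℝ X]

/-- Weak convergence of a sequence in a normed space. -/
def WeakConv (u : ℕ → X) (x : X) : Prop :=
  ∀ f : X →L[ℝ] ℝ, Tendsto (fun n => f (u n)) atTop (𝓝 (f x))

/-- An operator `A : X → X*` is pseudo-monotone (Brezis). -/
def PseudoMonotone (A : X → X →L[ℝ] ℝ) : Prop :=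
  ∀ (u : ℕ → X) (x : X), WeakConv u x →
    limsup (fun n => A (u n) (u n - x)) atTop ≤ 0 →
      ∀ y : X, A x (x - y) ≤ liminf (fun n => A (u n) (u n - y)) atTop

end

section Brouwer
open MeasureTheory Metric

/-- interpolation: `det (1 + M)` from `det (1 + t j M)`. -/
lemma det_interp {E : Type*} [AddCommGroup E] [Module ℝ E] [FiniteDimensional ℝ E]
    (ε : ℝ) (hε : 0 < ε) :
    ∃ (N : ℕ) (t c : ℕ → ℝ), (∀ j, 0 < t j ∧ t j < ε) ∧ (∑ j ∈ Finset.range N, c j = 1) ∧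
      ∀ M : E →ₗ[ℝ] E, LinearMap.det (1 + M) =
        ∑ j ∈ Finset.range N, c j * LinearMap.det (1 + t j • M) := by
  set n := Module.finrank ℝ E
  let t : ℕ → ℝ := fun j => ε / (j + 2)
  have ht : Function.Injective t := by
    intro i j h
    simp only [t] at h
    field_simp at h
    exact_mod_cast (by linarith : (i : ℝ) = j)
  let s := Finset.range (n + 1)
  refine ⟨n + 1, t, fun j => (Lagrange.basis s t j).eval 1, ?_, ?_, ?_⟩
  · intro j
    have : (0 : ℝ) ≤ j := Nat.cast_nonneg j
    refine ⟨by positivity, ?_⟩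
    simp only [t]
    rw [div_lt_iff₀ (by positivity)]
    nlinarith
  · have := Lagrange.sum_basis (s := s) (v := t) ht.injOn ⟨0, by simp [s]⟩
    rw [← Polynomial.eval_finsetSum, this]; simp
  · intro M
    let b := Module.finBasis ℝ E
    let A := LinearMap.toMatrix b b M
    let p : Polynomial ℝ := Matrix.det ((Polynomial.X : Polynomial ℝ) • A.map Polynomial.C +
      (1 : Matrix (Fin n) (Fin n) ℝ).map Polynomial.C)
    have hp : ∀ r : ℝ, p.eval r = LinearMap.det (1 + r • M) := by
      intro r
      rw [← LinearMap.det_toMatrix b]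
      simp only [p]
      rw [← Polynomial.coe_evalRingHom, RingHom.map_det]
      congr 1
      ext i j
      simp [A, Matrix.one_apply, LinearMap.toMatrix_apply, b.repr.map_add, Finsupp.single_apply, eq_comm]
      split_ifs <;> simp <;> ring
    have hd : p.degree < s.card := by
      refine lt_of_le_of_lt Polynomial.degree_le_natDegree ?_
      have := Polynomial.natDegree_det_X_add_C_le A 1
      simp only [Fintype.card_fin] at this
      simp only [s, Finset.card_range]
      exact_mod_cast Nat.lt_succ_of_le this
    have h1 := Lagrange.eq_interpolate (s := s) (v := t) ht.injOn hd
    have h2 := hp 1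
    rw [one_smul] at h2
    rw [← h2]
    have h3 := congrArg (Polynomial.eval 1) h1
    rw [Lagrange.interpolate_apply, Polynomial.eval_finsetSum] at h3
    rw [h3]
    refine Finset.sum_congr rfl fun j _ => ?_
    simp [hp, mul_comm]

lemma det_pos_of_small {E : Type*} [NormedAddCommGroup E] [NormedSpace ℝ E] [FiniteDimensional ℝ E]
    (M : E →L[ℝ] E) (hM : ‖M‖ < 1) : 0 < (1 + M).det := by
  have hc : ContinuousOn (fun s : ℝ => (1 + s • M).det) (Set.Icc 0 1) := by
    apply Continuous.continuousOn
    exact ContinuousLinearMap.continuous_det.comp (by fun_prop)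
  have hne : ∀ s ∈ Set.Icc (0 : ℝ) 1, (1 + s • M).det ≠ 0 := by
    intro s hs h0
    have : IsUnit (1 + s • M) := by
      have h1 : ‖-(s • M)‖ < 1 := by
        rw [norm_neg, norm_smul, Real.norm_of_nonneg hs.1]
        nlinarith [hs.2, norm_nonneg M]
      have := isUnit_one_sub_of_norm_lt_one h1
      simpa using this
    have h2 : IsUnit ((1 + s • M).det) := by
      have := (LinearMap.isUnit_iff_isUnit_det ((1 + s • M : E →L[ℝ] E) : E →ₗ[ℝ] E)).1
        (this.map (ContinuousLinearMap.toLinearMapRingHom (R₁ := ℝ) (M₁ := E)))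
      exact this
    exact h2.ne_zero h0
  by_contra hneg
  push Not at hneg
  have := intermediate_value_Icc' (zero_le_one' ℝ) hc
  obtain ⟨s, hs, h⟩ := this (show (0 : ℝ) ∈ _ from ⟨by simpa using hneg, by simp [ContinuousLinearMap.det]⟩)
  exact hne s hs h

lemma exists_sphere_between {E : Type*} [NormedAddCommGroup E] [NormedSpace ℝ E] {R : ℝ} {x y : E}
    (hx : ‖x‖ ≤ R) (hy : R < ‖y‖) : ∃ z, ‖z‖ = R ∧ ‖x - z‖ ≤ ‖x - y‖ := by
  have hc : ContinuousOn (fun s : ℝ => ‖x + s • (y - x)‖) (Set.Icc 0 1) := by fun_prop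
  obtain ⟨s, hs, h⟩ := intermediate_value_Icc (zero_le_one' ℝ) hc
    (show R ∈ _ from ⟨by simpa using hx, by simpa using hy.le⟩)
  refine ⟨_, h, ?_⟩
  have : x - (x + s • (y - x)) = s • (x - y) := by module
  rw [this, norm_smul, Real.norm_of_nonneg hs.1]
  nlinarith [hs.2, norm_nonneg (x - y)]

lemma lipschitz_ext {E : Type*} [NormedAddCommGroup E] [NormedSpace ℝ E] {R : ℝ} {g : E → E}
    {C : NNReal} (hL : LipschitzOnWith C g (closedBall 0 R)) (h0 : ∀ x, ‖x‖ = R → g x = 0) :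
    LipschitzWith C ((closedBall (0 : E) R).indicator g) := by
  classical
  have key : ∀ x y : E, ‖x‖ ≤ R → R < ‖y‖ → ‖g x‖ ≤ C * ‖x - y‖ := by
    intro x y hx hy
    obtain ⟨z, hz, hxz⟩ := exists_sphere_between hx hy
    have := (lipschitzOnWith_iff_norm_sub_le.1 hL) (by simpa using hx : x ∈ closedBall (0 : E) R)
      (by simpa using hz.le : z ∈ closedBall (0 : E) R)
    rw [h0 z hz, sub_zero] at this
    exact this.trans (by gcongr)
  rw [lipschitzWith_iff_norm_sub_le]
  intro x y
  by_cases hx : ‖x‖ ≤ R <;> by_cases hy : ‖y‖ ≤ R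
  · have := (lipschitzOnWith_iff_norm_sub_le.1 hL) (by simpa using hx : x ∈ closedBall (0 : E) R)
      (by simpa using hy : y ∈ closedBall (0 : E) R)
    simpa [Set.indicator, hx, hy] using this
  · simpa [Set.indicator, hx, hy] using key x y hx (not_le.1 hy)
  · simpa [Set.indicator, hx, hy, norm_sub_rev x y] using key y x hy (not_le.1 hx)
  · simp [Set.indicator, hx, hy]; positivity

lemma no_retract {E : Type*} [NormedAddCommGroup E] [InnerProductSpace ℝ E] [FiniteDimensional ℝ E]
    {R : ℝ} (hR : 0 < R) (g : E → E) (hg : ∀ x ∈ closedBall (0 : E) R, ContDiffAt ℝ 1 g x)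
    (h0 : ∀ x, ‖x‖ = R → g x = 0) (h1 : ∀ x ∈ ball (0 : E) R, ‖x + g x‖ = R) : False := by
  borelize E
  have hcont : ContinuousOn (fderiv ℝ g) (closedBall 0 R) := fun x hx =>
    (((hg x hx).fderiv_right (m := 0) (by norm_num)).continuousAt).continuousWithinAt
  have hcpt := isCompact_closedBall (0 : E) R
  obtain ⟨C, hC⟩ := hcpt.exists_bound_of_continuousOn hcont
  have hC0 : 0 ≤ C := (norm_nonneg _).trans (hC 0 (by simp [hR.le]))
  lift C to NNReal using hC0
  have hdiff : ∀ x ∈ closedBall (0 : E) R, DifferentiableAt ℝ g x := fun x hx =>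
    (hg x hx).differentiableAt (by norm_num)
  have hL : LipschitzOnWith C g (closedBall 0 R) :=
    (convex_closedBall (0 : E) R).lipschitzOnWith_of_nnnorm_fderiv_le hdiff
      (fun x hx => by exact_mod_cast hC x hx)
  have hLip := lipschitz_ext hL h0
  set G := (closedBall (0 : E) R).indicator g with hG
  let μ : Measure E := volume
  have hball : ∀ t : ℝ, 0 < t → t < 1 / (C + 1) →
      ∫ x in ball (0 : E) R, (1 + t • fderiv ℝ g x).det ∂μ = μ.real (ball 0 R) := by
    intro t ht0 ht
    have htC : t * C < 1 := by
      rw [lt_div_iff₀ (by positivity)] at ht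
      nlinarith
    let T : NNReal := ⟨t, ht0.le⟩
    have happ : ApproximatesLinearOn (fun x => x + t • G x)
        ((ContinuousLinearEquiv.refl ℝ E : E ≃L[ℝ] E) : E →L[ℝ] E) Set.univ (T * C) := by
      intro x _ y _
      have : x + t • G x - (y + t • G y) - (x - y) = t • (G x - G y) := by module
      simp only [ContinuousLinearEquiv.coe_refl, ContinuousLinearMap.coe_id', id_eq, this]
      rw [norm_smul, Real.norm_of_nonneg ht0.le]
      have := (lipschitzWith_iff_norm_sub_le.1 hLip) x y
      calc t * ‖G x - G y‖ ≤ t * (C * ‖x - y‖) := by gcongr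
        _ = (T : ℝ) * C * ‖x - y‖ := (mul_assoc _ _ _).symm
        _ = _ := by push_cast; rfl
    have hcond : Subsingleton E ∨ T * C < ‖((ContinuousLinearEquiv.refl ℝ E).symm : E →L[ℝ] E)‖₊⁻¹ := by
      rcases subsingleton_or_nontrivial E with h | h
      · exact Or.inl h
      · right
        have : ‖((ContinuousLinearEquiv.refl ℝ E).symm : E →L[ℝ] E)‖₊ = 1 := by
          ext; simp
        rw [this, inv_one]
        exact_mod_cast htC
    have hinj := (happ.injOn hcond)
    have hsurj := happ.surjective hcond
    have hout : ∀ x : E, x ∉ ball (0 : E) R → x + t • G x = x := by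
      intro x hx
      have : G x = 0 := by
        simp only [hG, Set.indicator]
        split_ifs with h
        · apply h0
          simp at hx h; linarith
        · rfl
      simp [this]
    have himg : (fun x => x + t • G x) '' ball 0 R = ball 0 R := by
      ext y
      constructor
      · rintro ⟨x, hx, rfl⟩
        by_contra hy
        have h2 := hinj (Set.mem_univ _) (Set.mem_univ _) (hout _ hy)
        simp only at h2 hy
        rw [h2] at hy
        exact hy hx
      · intro hy
        obtain ⟨x, rfl⟩ := hsurj y
        refine ⟨x, ?_, rfl⟩
        by_contra hx
        simp only [hout x hx] at hy
        exact hx hy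
    have hder : ∀ x ∈ ball (0 : E) R, HasFDerivWithinAt (fun x => x + t • G x)
        (1 + t • fderiv ℝ g x) (ball 0 R) x := by
      intro x hx
      have h2 : HasFDerivAt (fun x => x + t • g x) (1 + t • fderiv ℝ g x) x :=
        (hasFDerivAt_id x).add ((hdiff x (ball_subset_closedBall hx)).hasFDerivAt.const_smul t)
      refine h2.hasFDerivWithinAt.congr (fun y hy => ?_) ?_ <;>
        simp only [hG, Set.indicator]
      · rw [if_pos (ball_subset_closedBall hy)]
      · rw [if_pos (ball_subset_closedBall hx)]
    have := integral_image_eq_integral_abs_det_fderiv_smul μ measurableSet_ball hder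
      (hinj.mono (Set.subset_univ _)) (fun _ => (1 : ℝ))
    rw [himg] at this
    simp only [integral_const, smul_eq_mul, mul_one, measureReal_restrict_apply_univ] at this
    rw [this]
    refine setIntegral_congr_fun measurableSet_ball fun x hx => ?_
    show (1 + t • fderiv ℝ g x).det = |(1 + t • fderiv ℝ g x).det|
    rw [abs_of_pos]
    apply det_pos_of_small
    rw [norm_smul, Real.norm_of_nonneg ht0.le]
    exact (mul_le_mul_of_nonneg_left (hC x (ball_subset_closedBall hx)) ht0.le).trans_lt htC
  obtain ⟨N, t, c, ht, hc, hdet⟩ := det_interp (E := E) (1 / (C + 1)) (by positivity)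
  have hint : ∀ r : ℝ, IntegrableOn (fun x => (1 + r • fderiv ℝ g x).det) (ball (0 : E) R) μ := by
    intro r
    refine IntegrableOn.mono_set (ContinuousOn.integrableOn_compact hcpt ?_) ball_subset_closedBall
    exact ContinuousLinearMap.continuous_det.comp_continuousOn (by fun_prop)
  have hfin : ∫ x in ball (0 : E) R, (1 + fderiv ℝ g x).det ∂μ = μ.real (ball 0 R) := by
    have : ∀ x, (1 + fderiv ℝ g x).det = ∑ j ∈ Finset.range N, c j * (1 + t j • fderiv ℝ g x).det :=
      fun x => hdet (fderiv ℝ g x : E →ₗ[ℝ] E)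
    simp only [this]
    rw [integral_finsetSum _ (fun j _ => (hint (t j)).const_mul (c j))]
    simp only [integral_const_mul]
    rw [Finset.sum_congr rfl (fun j _ => by rw [hball (t j) (ht j).1 (ht j).2]), ← Finset.sum_mul, hc, one_mul]
  have hz : ∀ x ∈ ball (0 : E) R, (1 + fderiv ℝ g x).det = 0 := by
    intro x hx
    by_contra hne
    have h2 : HasFDerivAt (fun x => x + g x) (1 + fderiv ℝ g x) x :=
      (hasFDerivAt_id x).add ((hdiff x (ball_subset_closedBall hx)).hasFDerivAt)
    have h3 := h2.norm_sq
    have h4 : (fun y => ‖y + g y‖ ^ 2) =ᶠ[𝓝 x] fun _ => R ^ 2 := by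
      filter_upwards [isOpen_ball.mem_nhds hx] with y hy
      rw [h1 y hy]
    have h5 := h3.unique ((hasFDerivAt_const (R ^ 2) x).congr_of_eventuallyEq h4)
    have h6 : Function.Surjective ((1 + fderiv ℝ g x : E →L[ℝ] E) : E → E) := by
      have := (LinearMap.isUnit_iff_isUnit_det ((1 + fderiv ℝ g x : E →L[ℝ] E) : E →ₗ[ℝ] E)).2
        (isUnit_iff_ne_zero.2 hne)
      exact ((Module.End.isUnit_iff _).1 this).2
    obtain ⟨v, hv⟩ := h6 (x + g x)
    have h7 : (2 : ℕ) • inner ℝ (x + g x) ((1 + fderiv ℝ g x : E →L[ℝ] E) v) = (0 : ℝ) :=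
      congrArg (fun L => L v) h5
    rw [hv, real_inner_self_eq_norm_sq, h1 x hx, nsmul_eq_mul] at h7
    push_cast at h7
    nlinarith
  rw [setIntegral_congr_fun measurableSet_ball hz] at hfin
  simp only [integral_zero] at hfin
  have : 0 < μ.real (ball (0 : E) R) :=
    ENNReal.toReal_pos (measure_ball_pos μ _ hR).ne' measure_ball_lt_top.ne
  linarith

lemma smooth_zero {E : Type*} [NormedAddCommGroup E] [InnerProductSpace ℝ E]
    [FiniteDimensional ℝ E] {R : ℝ} (hR : 0 < R) (P : E → E) (hP : ContDiff ℝ 1 P)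
    (hne : ∀ x ∈ closedBall (0 : E) R, P x ≠ 0)
    (hpos : ∀ x, ‖x‖ = R → 0 < inner ℝ (P x) x) : False := by
  let D : E → ℝ := fun x => (inner ℝ (P x) x) ^ 2 + ‖P x‖ ^ 2 * (R ^ 2 - ‖x‖ ^ 2)
  have hD : ∀ x ∈ closedBall (0 : E) R, 0 < D x := by
    intro x hx
    have h1 : 0 < ‖P x‖ ^ 2 := by have := norm_pos_iff.2 (hne x hx); positivity
    have hx' : ‖x‖ ≤ R := by simpa using hx
    rcases hx'.lt_or_eq with h | h
    · have : 0 < R ^ 2 - ‖x‖ ^ 2 := by nlinarith [norm_nonneg x]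
      have := mul_pos h1 this
      simp only [D]; positivity
    · have := hpos x h
      simp only [D, h]
      rw [sub_self, mul_zero, add_zero]; positivity
  let lam : E → ℝ := fun x => (Real.sqrt (D x) - inner ℝ (P x) x) / ‖P x‖ ^ 2
  have hin : ContDiff ℝ 1 (fun x => inner ℝ (P x) x) := hP.inner ℝ contDiff_id
  have hns : ContDiff ℝ 1 (fun x => ‖P x‖ ^ 2) := hP.norm_sq ℝ
  have hDs : ContDiff ℝ 1 D :=
    (hin.pow 2).add (hns.mul (contDiff_const.sub (contDiff_id.norm_sq ℝ)))
  refine no_retract hR (fun x => lam x • P x) ?_ ?_ ?_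
  · intro x hx
    refine ContDiffAt.smul ?_ hP.contDiffAt
    refine ContDiffAt.div ((hDs.contDiffAt.sqrt (hD x hx).ne').sub hin.contDiffAt) hns.contDiffAt ?_
    have := norm_pos_iff.2 (hne x hx)
    positivity
  · intro x hx
    have : lam x = 0 := by
      simp only [lam, D, hx]
      rw [sub_self, mul_zero, add_zero, Real.sqrt_sq (hpos x hx).le, sub_self, zero_div]
    simp [this]
  · intro x hx
    have hx := ball_subset_closedBall hx
    have h1 := norm_pos_iff.2 (hne x hx)
    have hs := Real.sq_sqrt (hD x hx).le
    have : ‖x + lam x • P x‖ ^ 2 = R ^ 2 := by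
      rw [norm_add_sq_real, norm_smul, mul_pow, real_inner_smul_right, real_inner_comm,
        Real.norm_eq_abs, sq_abs]
      simp only [lam]
      simp only [D] at hs ⊢
      set s := Real.sqrt (inner ℝ (P x) x ^ 2 + ‖P x‖ ^ 2 * (R ^ 2 - ‖x‖ ^ 2))
      set a := inner ℝ (P x) x
      field_simp
      linear_combination hs
    exact (sq_eq_sq₀ (norm_nonneg _) hR.le).1 this

lemma exists_zero {E : Type*} [NormedAddCommGroup E] [InnerProductSpace ℝ E]
    [FiniteDimensional ℝ E] {R : ℝ} (hR : 0 < R) (P : E → E) (hP : Continuous P)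
    (hpos : ∀ x, ‖x‖ = R → 0 < inner ℝ (P x) x) : ∃ x, P x = 0 := by
  by_contra hcon
  push Not at hcon
  obtain ⟨d1, hd1, h1⟩ := (isCompact_closedBall (0 : E) R).exists_forall_le' (a := 0)
    (f := fun x => ‖P x‖) (by fun_prop) (fun x _ => norm_pos_iff.2 (hcon x))
  obtain ⟨d2, hd2, h2⟩ := (isCompact_sphere (0 : E) R).exists_forall_le' (a := 0)
    (f := fun x => inner ℝ (P x) x) (by fun_prop) (fun x hx => hpos x (by simpa using hx))
  obtain ⟨Q, hQ, hQP, -⟩ := hP.exists_contDiff_approx 1 (ε := fun _ => min d1 (d2 / R))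
    continuous_const (fun _ => by positivity)
  refine smooth_zero hR Q hQ ?_ ?_
  · intro x hx h0
    have h3 := (hQP x).trans_le (min_le_left _ _)
    rw [h0, dist_zero_left] at h3
    exact absurd (h1 x hx) (not_le.2 h3)
  · intro x hx
    have h3 := (hQP x).trans_le (min_le_right _ _)
    rw [dist_eq_norm, lt_div_iff₀ hR] at h3
    have h4 := h2 x (by simpa using hx)
    have h5 := abs_real_inner_le_norm (Q x - P x) x
    rw [hx, inner_sub_left] at h5
    have := neg_abs_le (inner ℝ (Q x) x - inner ℝ (P x) x)
    linarith

lemma galerkin {X : Type*} [NormedAddCommGroup X] [NormedSpace ℝ X] (B : X → X →L[ℝ] ℝ)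
    (hB : ∀ z, Continuous fun x => B x z) (R : ℝ) (hR : ∀ v, R < ‖v‖ → 0 < B v v)
    (F : Submodule ℝ X) [FiniteDimensional ℝ F] :
    ∃ u ∈ F, ‖u‖ ≤ R ∧ ∀ v ∈ F, B u v = 0 := by
  let E := EuclideanSpace ℝ (Fin (Module.finrank ℝ F))
  let e : E ≃L[ℝ] F := (toEuclidean : F ≃L[ℝ] _).symm
  let T : E →L[ℝ] X := F.subtypeL ∘L (e : E →L[ℝ] F)
  let L : E → (E →L[ℝ] ℝ) := fun x => (B (T x)) ∘L T
  let P : E → E := fun x => (InnerProductSpace.toDual ℝ E).symm (L x)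
  have hin : ∀ x y, inner ℝ (P x) y = B (T x) (T y) := by
    intro x y
    simp only [P, InnerProductSpace.toDual_symm_apply]
    rfl
  have hL : Continuous L := by
    rw [continuous_clm_apply]
    intro y
    exact (hB (T y)).comp T.continuous
  have hP : Continuous P := (InnerProductSpace.toDual ℝ E).symm.continuous.comp hL
  let S : F →L[ℝ] E := (e.symm : F →L[ℝ] E)
  obtain ⟨x, hx⟩ := exists_zero (R := (‖S‖ + 1) * (|R| + 1)) (by positivity) P hP (by
    intro x hx
    rw [hin]
    apply hR
    by_contra hle
    push Not at hle
    have h1 : ‖x‖ ≤ ‖S‖ * ‖e x‖ := by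
      have := S.le_opNorm (e x)
      simpa [S] using this
    have h2 : ‖e x‖ ≤ R := hle
    have h3 := le_abs_self R
    have : ‖S‖ * ‖e x‖ ≤ ‖S‖ * |R| := by gcongr; linarith
    nlinarith [norm_nonneg S, abs_nonneg R])
  have hz : ∀ y, B (T x) (T y) = 0 := fun y => by rw [← hin, hx, inner_zero_left]
  refine ⟨T x, (e x).2, ?_, ?_⟩
  · by_contra h
    exact (hR _ (not_le.1 h)).ne' (hz x)
  · intro v hv
    have : v = T (e.symm ⟨v, hv⟩) := by simp [T]
    rw [this]; exact hz _
end Brouwer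

lemma pm_conv {X : Type*} [NormedAddCommGroup X] [NormedSpace ℝ X]
    (A : X → X →L[ℝ] ℝ)
    (hbdd : ∀ M : Set X, Bornology.IsBounded M → Bornology.IsBounded (A '' M))
    (hpm : PseudoMonotone A) (u : ℕ → X) (x : X) (hu : WeakConv u x) (M : ℝ)
    (hM : ∀ n, ‖u n‖ ≤ M) (h0 : Tendsto (fun n => A (u n) (u n - x)) atTop (𝓝 0)) (z : X) :
    Tendsto (fun n => A (u n) z) atTop (𝓝 (A x z)) := by
  obtain ⟨K, hK⟩ := (hbdd (Metric.closedBall 0 M) Metric.isBounded_closedBall).exists_norm_le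
  have hK' : ∀ n, ‖A (u n)‖ ≤ K := fun n => hK _ ⟨u n, by simpa using hM n, rfl⟩
  have key : ∀ z : X, ∀ ε > 0, ∀ᶠ n in atTop, A x z - ε < A (u n) z := by
    intro z ε hε
    have h1 := hpm u x hu h0.limsup_eq.le (x - z)
    rw [sub_sub_cancel] at h1
    have hb : IsBoundedUnder (· ≥ ·) atTop (fun n => A (u n) (u n - (x - z))) := by
      refine isBoundedUnder_of ⟨-(K * (M + ‖x - z‖)), fun n => ?_⟩
      have h2 := (A (u n)).le_opNorm (u n - (x - z))
      have h3 : ‖A (u n)‖ * ‖u n - (x - z)‖ ≤ K * (M + ‖x - z‖) := by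
        have hK0 := (norm_nonneg _).trans (hK' n)
        exact mul_le_mul (hK' n) ((norm_sub_le _ _).trans (by gcongr; exact hM n)) (norm_nonneg _) hK0
      have h4 := neg_abs_le (A (u n) (u n - (x - z)))
      rw [Real.norm_eq_abs] at h2
      show -(K * (M + ‖x - z‖)) ≤ _
      linarith
    have h2 := eventually_lt_of_lt_liminf (lt_of_lt_of_le (by linarith : A x z - ε / 2 < A x z) h1) hb
    have h3 := h0.eventually_lt_const (show (0 : ℝ) < ε / 2 by positivity)
    filter_upwards [h2, h3] with n h2 h3
    have : u n - (x - z) = (u n - x) + z := by abel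
    rw [this, map_add] at h2
    linarith
  rw [Metric.tendsto_nhds]
  intro ε hε
  filter_upwards [key z ε hε, key (-z) ε hε] with n h1 h2
  rw [map_neg, map_neg] at h2
  rw [Real.dist_eq, abs_lt]
  constructor <;> linarith

lemma exists_norming {X : Type*} [NormedAddCommGroup X] [NormedSpace ℝ X]
    (W : Submodule ℝ (X →L[ℝ] ℝ)) [FiniteDimensional ℝ W] :
    ∃ N : Submodule ℝ X, FiniteDimensional ℝ N ∧
      ∀ w ∈ W, ∃ s ∈ N, ‖s‖ ≤ 1 ∧ ‖w‖ ≤ 2 * |w s| := by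
  classical
  haveI := FiniteDimensional.proper ℝ W
  let U : {s : X // ‖s‖ ≤ 1} → Set W := fun s => {w | 1 / 2 < |(w : X →L[ℝ] ℝ) s|}
  have hU : ∀ s, IsOpen (U s) := by
    intro s
    refine isOpen_lt continuous_const ?_
    have : Continuous fun w : W => (w : X →L[ℝ] ℝ) (s : X) := by fun_prop
    exact this.abs
  obtain ⟨t, ht⟩ := (isCompact_sphere (0 : W) 1).elim_finite_subcover U hU (by
    intro w hw
    have h1 : ‖(w : X →L[ℝ] ℝ)‖ = 1 := by
      have h2 : dist (w : X →L[ℝ] ℝ) 0 = 1 := hw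
      rwa [dist_zero_right] at h2
    obtain ⟨s, hs, h2⟩ := ContinuousLinearMap.exists_lt_apply_of_lt_opNorm (w : X →L[ℝ] ℝ)
      (r := 1 / 2) (by rw [h1]; norm_num)
    exact Set.mem_iUnion.2 ⟨⟨s, hs.le⟩, h2⟩)
  refine ⟨Submodule.span ℝ (t.image Subtype.val : Finset X), inferInstance, ?_⟩
  intro w hw
  by_cases h0 : w = 0
  · exact ⟨0, Submodule.zero_mem _, by simp, by simp [h0]⟩
  have hn := norm_pos_iff.2 h0
  let w' : W := ‖w‖⁻¹ • ⟨w, hw⟩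
  have hw' : w' ∈ Metric.sphere (0 : W) 1 := by
    show dist (‖w‖⁻¹ • w) 0 = 1
    rw [dist_zero_right, norm_smul, norm_inv, norm_norm, inv_mul_cancel₀ hn.ne']
  obtain ⟨s, hs, h1⟩ := Set.mem_iUnion₂.1 (ht hw')
  refine ⟨s, Submodule.subset_span (by simpa using ⟨s.2, hs⟩), s.2, ?_⟩
  have h2 : 1 / 2 < |‖w‖⁻¹ * w s| := h1
  rw [abs_mul, abs_of_pos (inv_pos.2 hn), ← div_eq_inv_mul, lt_div_iff₀ hn] at h2
  linarith

lemma exists_annih {X : Type*} [NormedAddCommGroup X] [NormedSpace ℝ X]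
    (W : Submodule ℝ (X →L[ℝ] ℝ)) [FiniteDimensional ℝ W] (g : X →L[ℝ] ℝ) (δ : ℝ) (hδ : 0 < δ)
    (hg : ∀ w ∈ W, δ ≤ ‖g - w‖) :
    ∃ x : X, ‖x‖ ≤ 1 ∧ (∀ w ∈ W, w x = 0) ∧ δ / 2 ≤ g x := by
  haveI : Module.Free ℝ W := Module.Free.of_divisionRing ℝ W
  let b := Module.finBasis ℝ W
  let K : Submodule ℝ X := ⨅ i, LinearMap.ker (((b i : X →L[ℝ] ℝ)) : X →ₗ[ℝ] ℝ)
  obtain ⟨h, hh, hn⟩ := exists_extension_norm_eq K (g ∘L K.subtypeL)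
  have hmem : g - h ∈ W := by
    have h1 := mem_span_of_iInf_ker_le_ker (L := fun i => ((b i : X →L[ℝ] ℝ) : X →ₗ[ℝ] ℝ))
      (K := ((g - h : X →L[ℝ] ℝ) : X →ₗ[ℝ] ℝ)) (by
        intro x hx
        have := hh ⟨x, hx⟩
        simp at this
        simp [this])
    have h2 : Set.range (fun i => ((b i : X →L[ℝ] ℝ) : X →ₗ[ℝ] ℝ)) =
        (ContinuousLinearMap.coeLM ℝ : (X →L[ℝ] ℝ) →ₗ[ℝ] _) '' Set.range (fun i => (b i : X →L[ℝ] ℝ)) := by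
      rw [← Set.range_comp]; rfl
    rw [h2, Submodule.span_image] at h1
    obtain ⟨w, hw, hwe⟩ := h1
    have h3 : w = g - h := ContinuousLinearMap.coe_injective hwe
    rw [← h3]
    refine Submodule.span_le.2 ?_ hw
    rintro _ ⟨i, rfl⟩
    exact (b i).2
  have h4 := hg _ hmem
  rw [sub_sub_cancel, hn] at h4
  obtain ⟨x, hx, hx2⟩ := ContinuousLinearMap.exists_lt_apply_of_lt_opNorm (g ∘L K.subtypeL)
    (r := δ / 2) (by linarith)
  have hx3 : δ / 2 < |g x| := hx2
  have hker : ∀ w ∈ W, w (x : X) = 0 := by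
    intro w hw
    have h5 : ∀ i, (b i : X →L[ℝ] ℝ) (x : X) = 0 := fun i => (Submodule.mem_iInf _).1 x.2 i
    let ev : W →ₗ[ℝ] ℝ :=
      { toFun := fun v => (v : X →L[ℝ] ℝ) (x : X)
        map_add' := fun _ _ => rfl
        map_smul' := fun _ _ => rfl }
    have h6 : ev = 0 := b.ext fun i => h5 i
    exact LinearMap.congr_fun h6 ⟨w, hw⟩
  have hx1 : ‖(x : X)‖ ≤ 1 := by simpa using hx.le
  rcases le_total 0 (g x) with h | h
  · exact ⟨x, hx1, hker, by rw [abs_of_nonneg h] at hx3; exact hx3.le⟩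
  · refine ⟨-x, by simpa using hx1, fun w hw => by simp [hker w hw], ?_⟩
    rw [abs_of_nonpos h] at hx3
    simpa using hx3.le

lemma exists_seq {X : Type*} [NormedAddCommGroup X] [NormedSpace ℝ X] (B : X → X →L[ℝ] ℝ) (R : ℝ)
    (hG : ∀ F : Submodule ℝ X, FiniteDimensional ℝ F →
      ∃ u ∈ F, ‖u‖ ≤ R ∧ ∀ v ∈ F, B u v = 0) :
    ∃ (F : ℕ → Submodule ℝ X) (W : ℕ → Submodule ℝ (X →L[ℝ] ℝ)) (u : ℕ → X),
      Monotone F ∧ Monotone W ∧ (∀ n, FiniteDimensional ℝ (W n)) ∧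
      ∀ n, u n ∈ F n ∧ ‖u n‖ ≤ R ∧ (∀ v ∈ F n, B (u n) v = 0) ∧ B (u n) ∈ W n ∧
        ∀ w ∈ W n, ∃ s ∈ F (n + 1), ‖s‖ ≤ 1 ∧ ‖w‖ ≤ 2 * |w s| := by
  choose G hG1 hG2 hG3 using hG
  choose N hN1 hN2 using fun (W : Submodule ℝ (X →L[ℝ] ℝ)) (h : FiniteDimensional ℝ W) =>
    exists_norming W
  let S := {p : Submodule ℝ X × Submodule ℝ (X →L[ℝ] ℝ) //
    FiniteDimensional ℝ p.1 ∧ FiniteDimensional ℝ p.2}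
  let W' : S → Submodule ℝ (X →L[ℝ] ℝ) := fun p =>
    p.1.2 ⊔ Submodule.span ℝ {B (G p.1.1 p.2.1)}
  have hW' : ∀ p : S, FiniteDimensional ℝ (W' p) := by
    intro p
    haveI := p.2.2
    exact Submodule.finiteDimensional_sup _ _
  let step : S → S := fun p => ⟨(p.1.1 ⊔ N (W' p) (hW' p), W' p), by
    haveI := p.2.1
    haveI := hN1 (W' p) (hW' p)
    exact Submodule.finiteDimensional_sup _ _, hW' p⟩
  let st : ℕ → S := fun n => step^[n] ⟨(⊥, ⊥), inferInstance, inferInstance⟩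
  have hst : ∀ n, st (n + 1) = step (st n) := fun n => Function.iterate_succ_apply' _ _ _
  refine ⟨fun n => (st n).1.1, fun n => W' (st n), fun n => G (st n).1.1 (st n).2.1, ?_, ?_, ?_, ?_⟩
  · refine monotone_nat_of_le_succ fun n => ?_
    rw [hst]; exact le_sup_left
  · refine monotone_nat_of_le_succ fun n => ?_
    have : W' (st n) = (st (n + 1)).1.2 := by rw [hst]
    rw [this]; exact le_sup_left
  · exact fun n => hW' _
  · intro n
    refine ⟨hG1 _ _, hG2 _ _, hG3 _ _, ?_, ?_⟩
    · exact Submodule.mem_sup_right (Submodule.mem_span_singleton_self _)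
    · intro w hw
      obtain ⟨s, hs, h⟩ := hN2 _ (hW' (st n)) w hw
      refine ⟨s, ?_, h⟩
      show s ∈ (st (n + 1)).1.1
      rw [hst]
      exact Submodule.mem_sup_right hs



theorem stmt_10 {X : Type*} [NormedAddCommGroup X] [NormedSpace ℝ X]
    [CompleteSpace X]
    -- reflexivity, encoded via weak sequential compactness of bounded sequences
    (hrefl : ∀ v : ℕ → X, (∃ M : ℝ, ∀ n, ‖v n‖ ≤ M) →
      ∃ (φ : ℕ → ℕ) (z : X), StrictMono φ ∧ WeakConv (fun n => v (φ n)) z)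
    (A : X → X →L[ℝ] ℝ)
    (hbdd : ∀ M : Set X, Bornology.IsBounded M → Bornology.IsBounded (A '' M))
    (hpm : PseudoMonotone A)
    (hcoer : Tendsto (fun x : X => A x x / ‖x‖) (Bornology.cobounded X) atTop) :
    Function.Surjective A := by
  intro f
  let B : X → X →L[ℝ] ℝ := fun x => A x - f
  have hBapp : ∀ x z, B x z = A x z - f z := fun x z => rfl
  -- demicontinuity
  have hBc : ∀ z, Continuous fun x => B x z := by
    intro z
    rw [continuous_iff_seqContinuous]
    intro u x hu
    obtain ⟨M, hM⟩ := (Metric.isBounded_range_of_tendsto u hu).exists_norm_le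
    have hM' : ∀ n, ‖u n‖ ≤ M := fun n => hM _ ⟨n, rfl⟩
    obtain ⟨K, hK⟩ := (hbdd (Metric.closedBall 0 M) Metric.isBounded_closedBall).exists_norm_le
    have hK' : ∀ n, ‖A (u n)‖ ≤ K := fun n => hK _ ⟨u n, by simpa using hM' n, rfl⟩
    have h0 : Tendsto (fun n => A (u n) (u n - x)) atTop (𝓝 0) := by
      have h1 : Tendsto (fun n => K * ‖u n - x‖) atTop (𝓝 0) := by
        simpa using (tendsto_iff_norm_sub_tendsto_zero.1 hu).const_mul K
      refine squeeze_zero_norm (fun n => ?_) h1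
      exact ((A (u n)).le_opNorm _).trans (by gcongr; exact hK' n)
    exact (pm_conv A hbdd hpm u x (fun l => (l.continuous.tendsto x).comp hu) M hM' h0 z).sub_const _
  -- coercivity
  obtain ⟨R, hR⟩ : ∃ R : ℝ, ∀ v, R < ‖v‖ → 0 < B v v := by
    have h1 := hcoer.eventually_gt_atTop ‖f‖
    rw [← comap_norm_atTop, eventually_comap] at h1
    obtain ⟨R, hR⟩ := eventually_atTop.1 h1
    refine ⟨max R 0, fun v hv => ?_⟩
    have h2 := hR ‖v‖ ((le_max_left _ _).trans hv.le) v rfl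
    have h3 : 0 < ‖v‖ := (le_max_right _ _).trans_lt hv
    rw [lt_div_iff₀ h3] at h2
    have h4 := (le_abs_self _).trans (f.le_opNorm v)
    rw [hBapp]; linarith
  obtain ⟨F, W, u, hF, hW, hWfd, hu⟩ := exists_seq B R
    (fun F hF => galerkin B hBc R hR F)
  obtain ⟨φ, x, hφ, hx⟩ := hrefl u ⟨R, fun n => (hu n).2.1⟩
  obtain ⟨K, hK⟩ := (hbdd (Metric.closedBall 0 R) Metric.isBounded_closedBall).exists_norm_le
  have hK' : ∀ n, ‖B (u n)‖ ≤ K + ‖f‖ := fun n =>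
    (norm_sub_le _ _).trans (by gcongr; exact hK _ ⟨u n, by simpa using (hu n).2.1, rfl⟩)
  have hzero : ∀ m, ∀ v ∈ F m, ∀ n, m ≤ n → B (u (φ n)) v = 0 := fun m v hv n hn =>
    (hu (φ n)).2.2.1 v (hF (hn.trans (hφ.id_le n)) hv)
  let Y : Submodule ℝ X := ⨆ n, F n
  have hYmem : ∀ v, v ∈ Y ↔ ∃ n, v ∈ F n := fun v =>
    Submodule.mem_iSup_of_directed _ hF.directed_le
  have hxY : x ∈ closure (Y : Set X) := by
    by_contra hcon
    obtain ⟨l, c, h1, h2⟩ := geometric_hahn_banach_closed_point (Y.convex.closure) isClosed_closure hcon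
    have h3 := hx l
    have h4 : l x ≤ c := le_of_tendsto h3 (Eventually.of_forall fun n =>
      (h1 _ (subset_closure ((hYmem _).2 ⟨φ n, (hu (φ n)).1⟩))).le)
    linarith
  have hBx : Tendsto (fun n => B (u (φ n)) x) atTop (𝓝 0) := by
    rw [Metric.tendsto_atTop]
    intro ε hε
    have hK0 : 0 ≤ K + ‖f‖ := (norm_nonneg _).trans (hK' 0)
    obtain ⟨y, hy, hxy⟩ := Metric.mem_closure_iff.1 hxY (ε / (K + ‖f‖ + 1)) (by positivity)
    obtain ⟨m, hm⟩ := (hYmem y).1 hy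
    refine ⟨m, fun n hn => ?_⟩
    have h1 : B (u (φ n)) x = B (u (φ n)) (x - y) := by
      rw [map_sub, hzero m y hm n hn, sub_zero]
    rw [dist_zero_right, h1]
    rw [dist_eq_norm, lt_div_iff₀ (by positivity)] at hxy
    have h2 := (B (u (φ n))).le_opNorm (x - y)
    have h3 : ‖B (u (φ n))‖ * ‖x - y‖ ≤ (K + ‖f‖) * ‖x - y‖ := by gcongr; exact hK' _
    nlinarith [norm_nonneg (x - y)]
  have hpair : Tendsto (fun n => A (u (φ n)) (u (φ n) - x)) atTop (𝓝 0) := by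
    have h1 := ((hx f).sub_const (f x)).sub hBx
    rw [sub_self, sub_zero] at h1
    refine h1.congr fun n => ?_
    have h2 := (hu (φ n)).2.2.1 _ (hu (φ n)).1
    rw [hBapp] at h2
    rw [hBapp, map_sub]
    linarith
  have hconv : ∀ z, Tendsto (fun n => B (u (φ n)) z) atTop (𝓝 (B x z)) := fun z =>
    (pm_conv A hbdd hpm (fun n => u (φ n)) x hx R (fun n => (hu _).2.1) hpair z).sub_const _
  have hgY : ∀ v ∈ Y, B x v = 0 := by
    intro v hv
    obtain ⟨m, hm⟩ := (hYmem v).1 hv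
    refine tendsto_nhds_unique (hconv v) (tendsto_const_nhds.congr' ?_)
    filter_upwards [eventually_ge_atTop m] with n hn
    exact (hzero m v hm n hn).symm
  refine ⟨x, ?_⟩
  suffices h : B x = 0 from sub_eq_zero.1 h
  by_cases hcl : ∀ ε > 0, ∃ n, ∃ w ∈ W n, ‖B x - w‖ < ε
  · rw [← norm_le_zero_iff]
    refine le_of_forall_pos_le_add fun ε hε => ?_
    obtain ⟨n, w, hw, hwε⟩ := hcl (ε / 3) (by positivity)
    obtain ⟨s, hs, hs1, hs2⟩ := (hu n).2.2.2.2 w hw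
    have h1 : w s = - ((B x - w) s) := by
      have := hgY s ((hYmem s).2 ⟨_, hs⟩)
      show w s = - (B x s - w s)
      rw [this]; ring
    have h2 := (B x - w).le_opNorm s
    rw [h1, abs_neg] at hs2
    rw [Real.norm_eq_abs] at h2
    have h3 : ‖B x‖ ≤ ‖B x - w‖ + ‖w‖ := by
      simpa using norm_add_le (B x - w) w
    nlinarith [norm_nonneg (B x - w)]
  · exfalso
    push Not at hcl
    obtain ⟨δ, hδ, hcl⟩ := hcl
    choose y hy1 hy2 hy3 using fun n =>
      haveI := hWfd n
      exists_annih (W n) (B x) δ hδ (hcl n)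
    obtain ⟨ψ, z, hψ, hz⟩ := hrefl y ⟨1, hy1⟩
    have h1 : δ / 2 ≤ B x z := ge_of_tendsto (hz (B x)) (Eventually.of_forall fun n => hy3 _)
    have h2 : ∀ n, B (u n) z = 0 := by
      intro n
      refine tendsto_nhds_unique (hz (B (u n))) (tendsto_const_nhds.congr' ?_)
      filter_upwards [eventually_ge_atTop n] with k hk
      exact (hy2 (ψ k) _ (hW (hk.trans (hψ.id_le k)) (hu n).2.2.2.1)).symm
    have h3 : B x z = 0 := by
      refine tendsto_nhds_unique (hconv z) ?_
      simp only [h2]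
      exact tendsto_const_nhds
    linarith
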